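/- arXiv:2602.03642 — 4 statements merged into one kernel-verified Lean document; each statement's English description precedes it below -/
import Mathlib

section
/- Let I be a nonzero ideal of ℤ[r] with gcd(N(I), Disc(f)) = 1 such that n − r ∈ I for some integer n. If P₁ and P₂ are prime ideals of ℤ[r] both containing I and with N(P₁) = N(P₂), then P₁ = P₂; that is, I cannot be divisible by two distinct prime ideals of the same norm. -/
open Polynomial

/-- The subring `ℤ[r]` of `K` generated by `r`. -/
noncomputable def Zr {K : Type*} [Field K] (r : K) : Subalgebra ℤ K := Algebra.adjoin ℤ {r}

/-- `r` as an element of `ℤ[r]`. -/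
noncomputable def rZ {K : Type*} [Field K] (r : K) : Zr r := ⟨r, Algebra.subset_adjoin rfl⟩

/-- The norm `N(I)` of an ideal `I` of `ℤ[r]`, i.e. the cardinality of `ℤ[r]/I`. -/
noncomputable def Nrm {K : Type*} [Field K] (r : K) (I : Ideal (Zr r)) : ℕ :=
  Nat.card ((Zr r) ⧸ I)

/-- The discriminant of the cubic `X³ + c₂X² + c₁X + c₀`. -/
def discF (c₀ c₁ c₂ : ℤ) : ℤ :=
  18 * c₂ * c₁ * c₀ - 4 * c₂ ^ 3 * c₀ + c₂ ^ 2 * c₁ ^ 2 - 4 * c₁ ^ 3 - 27 * c₀ ^ 2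

theorem mem_aux {R : Type*} [CommRing R] (P : Ideal R)
    (h : ∀ x : R, ∃ a : ℤ, x - (a : R) ∈ P) (a : ℤ) :
    (a : R) ∈ P ↔ ((Nat.card (R ⧸ P) : ℕ) : ℤ) ∣ a := by
  have h1 : addOrderOf (1 : R ⧸ P) = Nat.card (R ⧸ P) := by
    apply addOrderOf_eq_card_of_forall_mem_zmultiples
    intro y
    obtain ⟨x, rfl⟩ := Ideal.Quotient.mk_surjective y
    obtain ⟨a, ha⟩ := h x
    refine ⟨a, ?_⟩
    have := Ideal.Quotient.eq.mpr ha
    simp [this]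
  rw [← h1, addOrderOf_dvd_iff_zsmul_eq_zero, ← Ideal.Quotient.eq_zero_iff_mem]
  simp

theorem int_aux {K : Type*} [Field K] (r : K) (I : Ideal (Zr r))
    (hn : ∃ n : ℤ, (n : Zr r) - rZ r ∈ I) (x : Zr r) : ∃ a : ℤ, x - (a : Zr r) ∈ I := by
  obtain ⟨x, hx⟩ := x
  induction hx using Algebra.adjoin_induction with
  | mem y hy =>
    obtain rfl : y = r := hy
    obtain ⟨n, hn⟩ := hn
    refine ⟨n, ?_⟩
    have := I.neg_mem hn
    rw [neg_sub] at this
    exact this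
  | algebraMap a =>
    refine ⟨a, ?_⟩
    convert I.zero_mem
    rw [sub_eq_zero]
    ext
    simp
  | add x y hx hy h1 h2 =>
    obtain ⟨a, ha⟩ := h1
    obtain ⟨b, hb⟩ := h2
    refine ⟨a + b, ?_⟩
    convert I.add_mem ha hb using 1
    ext
    push_cast
    ring
  | mul x y hx hy h1 h2 =>
    obtain ⟨a, ha⟩ := h1
    obtain ⟨b, hb⟩ := h2
    refine ⟨a * b, ?_⟩
    convert I.add_mem (I.mul_mem_right ⟨y, hy⟩ ha) (I.mul_mem_left (a : Zr r) hb) using 1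
    ext
    push_cast
    ring

/-- Let `I` be a nonzero ideal of `ℤ[r]` with `gcd(N(I), Disc(f)) = 1` such
that `n − r ∈ I` for some integer `n`. If `P₁, P₂` are prime ideals of `ℤ[r]` both containing
`I` with `N(P₁) = N(P₂)`, then `P₁ = P₂`. -/
theorem stmt_3 (c₀ c₁ c₂ : ℤ)
    (hf : Irreducible (X ^ 3 + C c₂ * X ^ 2 + C c₁ * X + C c₀ : ℤ[X]))
    (K : Type*) [Field K] [NumberField K] (r : K)
    (hr : aeval r (X ^ 3 + C c₂ * X ^ 2 + C c₁ * X + C c₀ : ℤ[X]) = 0)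
    (hgen : Algebra.adjoin ℚ {r} = ⊤)
    (I : Ideal (Zr r)) (hI0 : I ≠ ⊥)
    (hgcd : Int.gcd (Nrm r I : ℤ) (discF c₀ c₁ c₂) = 1)
    (hn : ∃ n : ℤ, (n : Zr r) - rZ r ∈ I)
    (P₁ P₂ : Ideal (Zr r)) (hP₁ : P₁.IsPrime) (hP₂ : P₂.IsPrime)
    (hIP₁ : I ≤ P₁) (hIP₂ : I ≤ P₂) (hNN : Nrm r P₁ = Nrm r P₂) :
    P₁ = P₂ := by
  have h := int_aux r I hn
  have key : ∀ a : ℤ, (a : Zr r) ∈ P₁ ↔ (a : Zr r) ∈ P₂ := by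
    intro a
    rw [mem_aux P₁ (fun x => (h x).imp fun _ k => hIP₁ k),
      mem_aux P₂ (fun x => (h x).imp fun _ k => hIP₂ k)]
    unfold Nrm at hNN
    rw [hNN]
  ext x
  obtain ⟨a, ha⟩ := h x
  rw [← sub_add_cancel x (a : Zr r), P₁.add_mem_iff_right (hIP₁ ha),
    P₂.add_mem_iff_right (hIP₂ ha), key]
end

section
/- Let I be a nonzero ideal of ℤ[r] with gcd(N(I), Disc(f)) = 1 such that n − r ∈ I for some integer n. Then ρ(I) = 1; that is, there is exactly one residue class k modulo N(I) such that for every integer n one has n − r ∈ I if and only if n ≡ k (mod N(I)). -/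
open Polynomial

/-- `ρ(I) = #{n mod N(I) : I ∣ n − r}`. -/
noncomputable def rho {K : Type*} [Field K] (r : K) (I : Ideal (Zr r)) : ℕ :=
  Nat.card {k : ZMod (Nrm r I) // ∃ n : ℤ, (n : ZMod (Nrm r I)) = k ∧ (n : Zr r) - rZ r ∈ I}

theorem aux_surj {K : Type*} [Field K] (r : K) (I : Ideal (Zr r)) (n₀ : ℤ)
    (h : (n₀ : Zr r) - rZ r ∈ I) (x : Zr r) : ∃ a : ℤ, (a : Zr r) - x ∈ I := by
  obtain ⟨x, hx⟩ := x
  have hx' : x ∈ Algebra.adjoin ℤ {r} := hx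
  induction hx' using Algebra.adjoin_induction with
  | mem y hy =>
    obtain rfl : y = r := hy
    exact ⟨n₀, h⟩
  | algebraMap a =>
    refine ⟨a, ?_⟩
    have : (a : Zr r) - ⟨algebraMap ℤ K a, hx⟩ = 0 := by
      apply Subtype.ext
      simp
    rw [this]
    exact I.zero_mem
  | add y z hy hz ihy ihz =>
    obtain ⟨a, ha⟩ := ihy hy
    obtain ⟨b, hb⟩ := ihz hz
    refine ⟨a + b, ?_⟩
    have := I.add_mem ha hb
    convert this using 1
    apply Subtype.ext
    simp
    ring
  | mul y z hy hz ihy ihz =>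
    obtain ⟨a, ha⟩ := ihy hy
    obtain ⟨b, hb⟩ := ihz hz
    refine ⟨a * b, ?_⟩
    have := I.add_mem (I.mul_mem_left (b : Zr r) ha) (I.mul_mem_left (⟨y, hy⟩ : Zr r) hb)
    convert this using 1
    apply Subtype.ext
    simp
    ring

theorem aux_mem {K : Type*} [Field K] (r : K) (I : Ideal (Zr r)) (n₀ : ℤ)
    (h : (n₀ : Zr r) - rZ r ∈ I) (n : ℤ) :
    (n : Zr r) - rZ r ∈ I ↔ (n : ZMod (Nrm r I)) = n₀ := by
  have hN : Nrm r I = ringChar (Zr r ⧸ I) := by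
    have hb : Function.Bijective (ZMod.castHom (dvd_refl (ringChar (Zr r ⧸ I))) (Zr r ⧸ I)) := by
      refine ⟨ZMod.castHom_injective _, fun y => ?_⟩
      obtain ⟨x, rfl⟩ := Ideal.Quotient.mk_surjective y
      obtain ⟨a, ha⟩ := aux_surj r I n₀ h x
      refine ⟨a, ?_⟩
      rw [map_intCast, ← Ideal.Quotient.eq.2 ha, map_intCast]
    rw [Nrm, ← Nat.card_eq_of_bijective _ hb, Nat.card_zmod]
  rw [hN, ← sub_eq_zero (a := (n : ZMod (ringChar (Zr r ⧸ I)))), ← Int.cast_sub, CharP.intCast_eq_zero_iff _ (ringChar (Zr r ⧸ I)),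
    ← CharP.intCast_eq_zero_iff (Zr r ⧸ I), ← map_intCast (Ideal.Quotient.mk I),
    Ideal.Quotient.eq_zero_iff_mem]
  constructor
  · intro h1
    have := I.sub_mem h1 h
    simpa using this
  · intro h1
    have := I.add_mem h1 h
    simpa using this

/-- Let `I` be a nonzero ideal of `ℤ[r]` with `gcd(N(I), Disc(f)) = 1` such
that `n − r ∈ I` for some integer `n`. Then `ρ(I) = 1`; that is, there is exactly one residue
class `k` modulo `N(I)` such that for every integer `n` one has `n − r ∈ I` iff
`n ≡ k (mod N(I))`. -/
theorem stmt_4 (c₀ c₁ c₂ : ℤ)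
    (hf : Irreducible (X ^ 3 + C c₂ * X ^ 2 + C c₁ * X + C c₀ : ℤ[X]))
    (K : Type*) [Field K] [NumberField K] (r : K)
    (hr : aeval r (X ^ 3 + C c₂ * X ^ 2 + C c₁ * X + C c₀ : ℤ[X]) = 0)
    (hgen : Algebra.adjoin ℚ {r} = ⊤)
    (I : Ideal (Zr r)) (hI0 : I ≠ ⊥)
    (hgcd : Int.gcd (Nrm r I : ℤ) (discF c₀ c₁ c₂) = 1)
    (hn : ∃ n : ℤ, (n : Zr r) - rZ r ∈ I) :
    rho r I = 1 ∧
      ∃! k : ZMod (Nrm r I), ∀ n : ℤ,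
        ((n : Zr r) - rZ r ∈ I ↔ (n : ZMod (Nrm r I)) = k) := by
  obtain ⟨n₀, h⟩ := hn
  have key := aux_mem r I n₀ h
  refine ⟨?_, (n₀ : ZMod (Nrm r I)), key, fun k hk => ((hk n₀).1 h).symm⟩
  rw [rho, Nat.card_eq_one_iff_unique]
  refine ⟨⟨?_⟩, ⟨⟨n₀, n₀, rfl, h⟩⟩⟩
  rintro ⟨a, n, rfl, hn⟩ ⟨b, m, rfl, hm⟩
  apply Subtype.ext
  exact ((key n).1 hn).trans ((key m).1 hm).symm
end

section
/- Let I be a nonzero ideal of ℤ[r] with gcd(N(I), Disc(f)) = 1 and ρ(I) = 1. Then for every integer m one has m ∈ I if and only if N(I) divides m. -/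
open Polynomial

/-- Let `I` be a nonzero ideal of `ℤ[r]` with `gcd(N(I), Disc(f)) = 1` and
`ρ(I) = 1`. Then for every integer `m` one has `m ∈ I` if and only if `N(I) ∣ m`. -/
theorem stmt_5 (c₀ c₁ c₂ : ℤ)
    (hf : Irreducible (X ^ 3 + C c₂ * X ^ 2 + C c₁ * X + C c₀ : ℤ[X]))
    (K : Type*) [Field K] [NumberField K] (r : K)
    (hr : aeval r (X ^ 3 + C c₂ * X ^ 2 + C c₁ * X + C c₀ : ℤ[X]) = 0)
    (hgen : Algebra.adjoin ℚ {r} = ⊤)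
    (I : Ideal (Zr r)) (hI0 : I ≠ ⊥)
    (hgcd : Int.gcd (Nrm r I : ℤ) (discF c₀ c₁ c₂) = 1)
    (hrho : rho r I = 1) :
    ∀ m : ℤ, (m : Zr r) ∈ I ↔ (Nrm r I : ℤ) ∣ m := by
  have hne : Nat.card {k : ZMod (Nrm r I) //
      ∃ n : ℤ, (n : ZMod (Nrm r I)) = k ∧ (n : Zr r) - rZ r ∈ I} ≠ 0 := by
    have h := hrho
    unfold rho at h
    omega
  obtain ⟨⟨⟨k, n, -, hn⟩⟩, -⟩ := Nat.card_ne_zero.mp hne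
  have hq : ((n : ℤ) : Zr r ⧸ I) = Ideal.Quotient.mk I (rZ r) := by
    rw [← map_intCast (Ideal.Quotient.mk I) n]
    exact Ideal.Quotient.eq.mpr hn
  have key : ∀ (x : K) (hx : x ∈ Zr r),
      ∃ a : ℤ, (a : Zr r ⧸ I) = Ideal.Quotient.mk I ⟨x, hx⟩ := by
    intro x hx
    unfold Zr at hx
    induction hx using Algebra.adjoin_induction with
    | mem x hx =>
      obtain rfl : x = r := hx
      exact ⟨n, hq⟩
    | algebraMap a =>
      refine ⟨a, ?_⟩
      rw [← map_intCast (Ideal.Quotient.mk I) a]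
      congr 1
    | add x y hx hy ha hb =>
      obtain ⟨a, ha⟩ := ha
      obtain ⟨b, hb⟩ := hb
      refine ⟨a + b, ?_⟩
      rw [Int.cast_add, ha, hb, ← map_add]
      rfl
    | mul x y hx hy ha hb =>
      obtain ⟨a, ha⟩ := ha
      obtain ⟨b, hb⟩ := hb
      refine ⟨a * b, ?_⟩
      rw [Int.cast_mul, ha, hb, ← map_mul]
      rfl
  obtain ⟨p, hp⟩ := CharP.exists (Zr r ⧸ I)
  have hbij : Function.Bijective (ZMod.castHom (dvd_refl p) (Zr r ⧸ I)) := by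
    refine ⟨ZMod.castHom_injective _, fun y => ?_⟩
    obtain ⟨⟨x, hx⟩, rfl⟩ := Ideal.Quotient.mk_surjective y
    obtain ⟨a, ha⟩ := key x hx
    exact ⟨(a : ZMod p), by rw [map_intCast, ha]⟩
  have hcard : Nrm r I = p := by
    unfold Nrm
    rw [← Nat.card_congr (Equiv.ofBijective _ hbij), Nat.card_zmod]
  intro m
  rw [hcard, ← CharP.intCast_eq_zero_iff (Zr r ⧸ I) p m, ← map_intCast (Ideal.Quotient.mk I) m,
    Ideal.Quotient.eq_zero_iff_mem]
end

section
/- Let α, δ > 0 and suppose that for every sufficiently large X there is a set A₁(X) ⊆ {n ∈ ℤ : X < n < 2X} such that #A₁(X)/X → α as X → ∞ and L₁(n, X) > (1 + δ)·log X for all n ∈ A₁(X). Then for every ε > 0 and all sufficiently large X, the number of integers n with X < n < 2X for which f(n) has a prime factor p ≥ X^{1 + αδ/2 − ε} is at least (α²δ − ε)·X. -/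
open Polynomial NumberField

open Classical in
/-- `L₁(n, X) = ∑_{P prime ideal of O_K, N(P) ≤ 3X} v_P((n − r))·log N(P)`, where
`v_P` is the exponent of `P` in the prime ideal factorization of the ideal `(n − r)`. -/
noncomputable def L1 {K : Type*} [Field K] [NumberField K] (rO : 𝓞 K) (n : ℤ) (Xr : ℝ) : ℝ :=
  ∑ᶠ P : Ideal (𝓞 K),
    if P.IsPrime ∧ (Nat.card ((𝓞 K) ⧸ P) : ℝ) ≤ 3 * Xr then
      (Multiset.count P
          (UniqueFactorizationMonoid.normalizedFactors
            (Ideal.span {(n : 𝓞 K) - rO})) : ℝ) * Real.log (Nat.card ((𝓞 K) ⧸ P))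
    else 0

section Mertens
variable (K : Type*) [Field K] [NumberField K]

lemma IS_finite (x : ℝ) : {I : Ideal (𝓞 K) | I ≠ ⊥ ∧ (Ideal.absNorm I : ℝ) ≤ x}.Finite := by
  refine (Ideal.finite_setOfPred_absNorm_le (S := 𝓞 K) ⌊x⌋₊).subset ?_
  rintro I ⟨_, h⟩
  exact Nat.le_floor h

noncomputable def IS (x : ℝ) : Finset (Ideal (𝓞 K)) := (IS_finite K x).toFinset

open Classical in
noncomputable def PS (x : ℝ) : Finset (Ideal (𝓞 K)) := (IS K x).filter (fun I => I.IsPrime)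

variable {K}
lemma mem_IS {x : ℝ} {I : Ideal (𝓞 K)} : I ∈ IS K x ↔ I ≠ ⊥ ∧ (Ideal.absNorm I : ℝ) ≤ x := by
  simp [IS]

lemma mem_PS {x : ℝ} {I : Ideal (𝓞 K)} :
    I ∈ PS K x ↔ I ≠ ⊥ ∧ (Ideal.absNorm I : ℝ) ≤ x ∧ I.IsPrime := by
  simp [PS, mem_IS, and_assoc]

lemma norm_two_le {P : Ideal (𝓞 K)} (h0 : P ≠ ⊥) (hP : P.IsPrime) : 2 ≤ Ideal.absNorm P := by
  have h1 : Ideal.absNorm P ≠ 0 := by simpa [Ideal.absNorm_eq_zero_iff] using h0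
  have h2 : Ideal.absNorm P ≠ 1 := by simpa [Ideal.absNorm_eq_one_iff] using hP.ne_top
  omega

variable (K) in
lemma card_IS_tendsto : ∃ κ : ℝ, 0 < κ ∧
    Filter.Tendsto (fun x : ℝ => ((IS K x).card : ℝ) / x) Filter.atTop (nhds κ) := by
  have h := NumberField.Ideal.tendsto_norm_le_div_atTop₀ K
  refine ⟨_, ?_, h.congr ?_⟩
  · have := NumberField.Units.regulator_pos K
    have h2 : (NumberField.discr K : ℝ) ≠ 0 := by exact_mod_cast NumberField.discr_ne_zero K
    have h3 : 0 < (NumberField.classNumber K : ℝ) := by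
      exact_mod_cast Nat.pos_of_ne_zero (NumberField.classNumber_ne_zero K)
    have h4 : 0 < (NumberField.Units.torsionOrder K : ℝ) := by
      exact_mod_cast Nat.pos_of_ne_zero (NumberField.Units.torsionOrder_ne_zero K)
    have := abs_pos.2 h2
    have := Real.pi_pos
    positivity
  · intro x
    congr 2
    rw [← Nat.card_eq_finsetCard]
    exact Nat.card_congr
      { toFun := fun I => ⟨I.1.1, mem_IS.2 ⟨nonZeroDivisors.coe_ne_zero I.1, I.2⟩⟩
        invFun := fun I => ⟨⟨I.1, mem_nonZeroDivisors_of_ne_zero (mem_IS.1 I.2).1⟩, (mem_IS.1 I.2).2⟩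
        left_inv := fun I => rfl
        right_inv := fun I => rfl }

open Classical in
lemma log_norm_eq (I : Ideal (𝓞 K)) (hI : I ≠ ⊥) (F : Finset (Ideal (𝓞 K)))
    (hF : ∀ P ∈ UniqueFactorizationMonoid.normalizedFactors I, P ∈ F) :
    Real.log (Ideal.absNorm I) = ∑ P ∈ F,
      (Multiset.count P (UniqueFactorizationMonoid.normalizedFactors I) : ℝ) *
        Real.log (Ideal.absNorm P) := by
  have h1 : (UniqueFactorizationMonoid.normalizedFactors I).prod = I :=
    associated_iff_eq.1 (UniqueFactorizationMonoid.prod_normalizedFactors hI)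
  have h2 : ∏ P ∈ F, P ^ (Multiset.count P (UniqueFactorizationMonoid.normalizedFactors I)) = I := by
    rw [← Finset.prod_multiset_count_of_subset, h1]
    intro P hP
    exact hF P (Multiset.mem_toFinset.1 hP)
  conv_lhs => rw [← h2]
  rw [map_prod, Nat.cast_prod, Real.log_prod]
  · refine Finset.sum_congr rfl fun P _ => ?_
    simp
  · intro P _
    by_cases hP : P ∈ UniqueFactorizationMonoid.normalizedFactors I
    · have := UniqueFactorizationMonoid.ne_zero_of_mem_normalizedFactors hP
      have h1 : Ideal.absNorm P ≠ 0 := by simpa [Ideal.absNorm_eq_zero_iff] using this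
      rw [map_pow]
      exact_mod_cast pow_ne_zero _ h1
    · simp [Multiset.count_eq_zero_of_notMem hP]

lemma mertens_ineq (x : ℝ) :
    ∑ P ∈ PS K x, Real.log (Ideal.absNorm P) * ((IS K (x / Ideal.absNorm P)).card : ℝ)
      ≤ ((IS K x).card : ℝ) * Real.log x := by
  classical
  have h1 : ∀ I ∈ IS K x, ∑ P ∈ PS K x, (if P ∣ I then Real.log (Ideal.absNorm P) else 0)
      ≤ Real.log x := by
    intro I hI
    obtain ⟨h0, hx⟩ := mem_IS.1 hI
    have hN : Ideal.absNorm I ≠ 0 := by simpa [Ideal.absNorm_eq_zero_iff] using h0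
    have hN' : 0 < (Ideal.absNorm I : ℝ) := by positivity
    refine le_trans ?_ (Real.log_le_log hN' hx)
    rw [log_norm_eq I h0 (PS K x)]
    · refine Finset.sum_le_sum fun P hP => ?_
      obtain ⟨hP0, hPx, hPp⟩ := mem_PS.1 hP
      have hl : 0 ≤ Real.log (Ideal.absNorm P) := Real.log_natCast_nonneg _
      split_ifs with hd
      · refine le_mul_of_one_le_left hl ?_
        have : P ∈ UniqueFactorizationMonoid.normalizedFactors I := by
          rw [Ideal.mem_normalizedFactors_iff h0]
          exact ⟨hPp, Ideal.le_of_dvd hd⟩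
        exact_mod_cast Multiset.one_le_count_iff_mem.2 this
      · positivity
    · intro P hP
      have hP' := (Ideal.mem_normalizedFactors_iff h0).1 hP
      refine mem_PS.2 ⟨UniqueFactorizationMonoid.ne_zero_of_mem_normalizedFactors hP, ?_, hP'.1⟩
      refine le_trans ?_ hx
      exact_mod_cast Nat.le_of_dvd (Nat.pos_of_ne_zero hN) (Ideal.absNorm_dvd_absNorm_of_le hP'.2)
  have h2 := Finset.sum_le_sum h1
  rw [Finset.sum_const, nsmul_eq_mul, Finset.sum_comm] at h2
  refine le_trans (Finset.sum_le_sum fun P hP => ?_) h2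
  obtain ⟨hP0, hPx, hPp⟩ := mem_PS.1 hP
  have hl : 0 ≤ Real.log (Ideal.absNorm P) := Real.log_natCast_nonneg _
  have hN := norm_two_le hP0 hPp
  have hN' : (0:ℝ) < Ideal.absNorm P := by exact_mod_cast (by omega : 0 < Ideal.absNorm P)
  rw [← Finset.sum_filter, Finset.sum_const, nsmul_eq_mul, mul_comm]
  refine mul_le_mul_of_nonneg_right ?_ hl
  norm_cast
  refine Finset.card_le_card_of_injOn (fun J => P * J) ?_ ?_
  · intro J hJ
    obtain ⟨h0, hx⟩ := mem_IS.1 hJ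
    simp only [Finset.coe_filter, Set.mem_ofPred_eq, mem_IS]
    refine ⟨⟨mul_ne_zero hP0 h0, ?_⟩, dvd_mul_right _ _⟩
    rw [map_mul]; push_cast
    rw [le_div_iff₀ hN'] at hx
    linarith
  · intro J _ J' _ h
    exact mul_left_cancel₀ (a := P) hP0 h

lemma mertens (ε : ℝ) (hε : 0 < ε) : ∀ᶠ x : ℝ in Filter.atTop,
    ∑ P ∈ PS K x, Real.log (Ideal.absNorm P) / (Ideal.absNorm P : ℝ) ≤ (1 + ε) * Real.log x := by
  obtain ⟨κ, hκ, ht⟩ := card_IS_tendsto K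
  obtain ⟨η, hη, hη1, hη2⟩ : ∃ η : ℝ, 0 < η ∧ η ≤ 1/4 ∧ 10 * η ≤ ε :=
    ⟨min (1/4) (ε/10), by positivity, min_le_left _ _, by linarith [min_le_right (1/4) (ε/10)]⟩
  have e1 := ht.eventually (lt_mem_nhds (show (1 - η) * κ < κ by nlinarith))
  have e2 := ht.eventually (gt_mem_nhds (show κ < (1 + η) * κ by nlinarith))
  obtain ⟨y0, hy0⟩ := Filter.eventually_atTop.1
    ((e1.and e2).and (Filter.eventually_ge_atTop (1:ℝ)))
  have hy1 : 1 ≤ y0 := (hy0 y0 le_rfl).2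
  have e3 : ∀ᶠ x : ℝ in Filter.atTop, Real.log y0 / η ≤ Real.log x :=
    Real.tendsto_log_atTop.eventually (Filter.eventually_ge_atTop _)
  filter_upwards [e3, Filter.eventually_ge_atTop (1:ℝ)] with x h3 hx1
  rw [div_le_iff₀ hη] at h3
  have hm := mertens_ineq (K := K) (x * y0)
  have hxy : y0 ≤ x * y0 := by nlinarith
  have hu : ((IS K (x * y0)).card : ℝ) ≤ (1 + η) * κ * (x * y0) := by
    have := (hy0 _ hxy).1.2
    rw [div_lt_iff₀ (by positivity)] at this
    exact this.le
  have hl : ∑ P ∈ PS K x, (Real.log (Ideal.absNorm P) / (Ideal.absNorm P : ℝ)) *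
      ((1 - η) * κ * (x * y0)) ≤
      ∑ P ∈ PS K (x * y0), Real.log (Ideal.absNorm P) *
        ((IS K (x * y0 / Ideal.absNorm P)).card : ℝ) := by
    refine le_trans (Finset.sum_le_sum (g := fun P => Real.log (Ideal.absNorm P) *
        ((IS K (x * y0 / Ideal.absNorm P)).card : ℝ)) fun P hP => ?_)
      (Finset.sum_le_sum_of_subset_of_nonneg ?_ ?_)
    · obtain ⟨hP0, hPx, hPp⟩ := mem_PS.1 hP
      have hl : 0 ≤ Real.log (Ideal.absNorm P) := Real.log_natCast_nonneg _
      have hN := norm_two_le hP0 hPp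
      have hN' : (0:ℝ) < Ideal.absNorm P := by exact_mod_cast (by omega : 0 < Ideal.absNorm P)
      have hge : y0 ≤ x * y0 / Ideal.absNorm P := by
        rw [le_div_iff₀ hN']; nlinarith
      have := (hy0 _ hge).1.1
      rw [lt_div_iff₀ (by linarith)] at this
      calc _ = Real.log (Ideal.absNorm P) * ((1 - η) * κ * (x * y0 / Ideal.absNorm P)) := by ring
        _ ≤ _ := mul_le_mul_of_nonneg_left this.le hl
    · intro P hP
      obtain ⟨hP0, hPx, hPp⟩ := mem_PS.1 hP
      exact mem_PS.2 ⟨hP0, by nlinarith, hPp⟩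
    · intro P _ _
      have hl : 0 ≤ Real.log (Ideal.absNorm P) := Real.log_natCast_nonneg _
      positivity
  rw [← Finset.sum_mul] at hl
  have hlog : Real.log (x * y0) = Real.log x + Real.log y0 :=
    Real.log_mul (by positivity) (by positivity)
  have hlx : 0 ≤ Real.log x := Real.log_nonneg hx1
  have hly : 0 ≤ Real.log y0 := Real.log_nonneg hy1
  set S := ∑ P ∈ PS K x, Real.log (Ideal.absNorm P) / (Ideal.absNorm P : ℝ)
  have key : S * (1 - η) * (κ * (x * y0)) ≤ (1 + η) * ((1 + η) * Real.log x) * (κ * (x * y0)) := by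
    calc S * (1 - η) * (κ * (x * y0)) = S * ((1 - η) * κ * (x * y0)) := by ring
      _ ≤ _ := hl
      _ ≤ _ := hm
      _ ≤ ((1 + η) * κ * (x * y0)) * ((1 + η) * Real.log x) := by
        rw [hlog]
        exact mul_le_mul hu (by linarith) (by positivity) (by positivity)
      _ = _ := by ring
  have key2 := le_of_mul_le_mul_right key (by positivity)
  have : S * (1 - η) ≤ ((1 + ε) * Real.log x) * (1 - η) := by
    refine key2.trans ?_
    have : (1 + η) * (1 + η) ≤ (1 + ε) * (1 - η) := by nlinarith
    nlinarith
  exact le_of_mul_le_mul_right this (by linarith)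
end Mertens

section Arith
variable {K : Type*} [Field K] [NumberField K]

lemma spacing_count (T : Finset ℤ) (Y s : ℝ) (hs : 0 < s) (hY0 : 0 ≤ Y)
    (hT : ∀ n ∈ T, Y < (n:ℝ) ∧ (n:ℝ) < 2 * Y)
    (hsp : ∀ n ∈ T, ∀ m ∈ T, m < n → s ≤ (n:ℝ) - m) : (T.card : ℝ) ≤ Y / s + 1 := by
  rcases T.eq_empty_or_nonempty with rfl | ⟨n0, hn0⟩
  · simp; positivity
  have hY : 0 < Y := by linarith [(hT _ hn0).1, (hT _ hn0).2]
  have h1 : T.card ≤ (Finset.range (⌊Y / s⌋₊ + 1)).card := by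
    refine Finset.card_le_card_of_injOn (fun n => ⌊((n:ℝ) - Y) / s⌋₊) ?_ ?_
    · intro n hn
      simp only [Finset.coe_range, Set.mem_Iio]
      refine Nat.lt_succ_of_le (Nat.floor_le_floor ?_)
      have := hT n hn
      gcongr; linarith
    · have key : ∀ n ∈ T, ∀ m ∈ T, m < n → ⌊((m:ℝ) - Y) / s⌋₊ < ⌊((n:ℝ) - Y) / s⌋₊ := by
        intro n hn m hm hlt
        have h0 : 0 ≤ ((m:ℝ) - Y) / s := div_nonneg (by linarith [(hT m hm).1]) hs.le
        rw [← Nat.succ_le_iff, Nat.succ_eq_add_one, ← Nat.floor_add_one h0]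
        refine Nat.floor_le_floor ?_
        rw [← sub_nonneg]
        have := hsp n hn m hm hlt
        have : ((n:ℝ) - Y) / s - (((m:ℝ) - Y) / s + 1) = ((n:ℝ) - m - s) / s := by field_simp; ring
        rw [this]
        exact div_nonneg (by linarith) hs.le
      intro n hn m hm h
      rcases lt_trichotomy n m with h' | h' | h'
      · have := key m hm n hn h'; simp only at h; omega
      · exact h'
      · have := key n hn m hm h'; simp only at h; omega
  rw [Finset.card_range] at h1
  calc (T.card : ℝ) ≤ ((⌊Y / s⌋₊ + 1 : ℕ) : ℝ) := by exact_mod_cast h1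
    _ ≤ _ := by push_cast; linarith [Nat.floor_le (show 0 ≤ Y / s by positivity)]

lemma sum_count_le (S : Finset ℤ) (c : ℤ → ℕ) (N Y : ℝ) (hN : 1 < N) (hY : 0 ≤ Y)
    (h : ∀ k, 1 ≤ k → ((S.filter (fun n => k ≤ c n)).card : ℝ) ≤ Y / N ^ k + 1)
    (L B : ℝ) (hL : 0 ≤ L) (hB : 0 ≤ B) (hc : ∀ n ∈ S, c n * L ≤ B) :
    ∑ n ∈ S, (c n : ℝ) * L ≤ Y / (N - 1) * L + B := by
  set m := S.sup c
  have h1 : ∀ n ∈ S, (c n : ℝ) = ∑ k ∈ Finset.Icc 1 m, if k ≤ c n then (1:ℝ) else 0 := by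
    intro n hn
    have : c n ≤ m := Finset.le_sup hn
    rw [← Finset.sum_filter, Finset.sum_const, nsmul_eq_mul, mul_one]
    have : (Finset.Icc 1 m).filter (fun k => k ≤ c n) = Finset.Icc 1 (c n) := by
      ext k; simp only [Finset.mem_filter, Finset.mem_Icc]; omega
    rw [this]; simp
  have hm : m * L ≤ B := by
    rcases S.eq_empty_or_nonempty with h0 | h0
    · simp [m, h0, hB]
    · obtain ⟨n, hn, he⟩ := Finset.exists_mem_eq_sup S h0 c
      rw [show m = c n from he]; exact hc n hn
  have h2 : ∑ n ∈ S, (c n : ℝ) ≤ Y / (N - 1) + m := by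
    rw [Finset.sum_congr rfl h1, Finset.sum_comm]
    calc _ ≤ ∑ k ∈ Finset.Icc 1 m, (Y / N ^ k + 1) := by
          refine Finset.sum_le_sum fun k hk => ?_
          rw [← Finset.sum_filter, Finset.sum_const, nsmul_eq_mul, mul_one]
          exact h k (Finset.mem_Icc.1 hk).1
      _ ≤ _ := by
          have hind : ∀ m : ℕ, ∑ k ∈ Finset.Icc 1 m, (1 / N ^ k) = (1 - 1 / N ^ m) / (N - 1) := by
            intro m
            have : N - 1 ≠ 0 := by linarith
            have : N ≠ 0 := by linarith
            induction m with
            | zero => simp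
            | succ m ih => rw [Finset.sum_Icc_succ_top (by omega), ih]; field_simp; ring
          rw [Finset.sum_add_distrib]
          simp only [Finset.sum_const, Nat.card_Icc, nsmul_eq_mul, mul_one, Nat.add_sub_cancel]
          gcongr
          simp only [div_eq_mul_one_div Y]
          rw [← Finset.mul_sum, hind]
          refine mul_le_mul_of_nonneg_left (div_le_div_of_nonneg_right ?_ (by linarith)) hY
          · have : 0 < 1 / N ^ m := by positivity
            linarith
  rw [← Finset.sum_mul]
  nlinarith

variable (c₀ c₁ c₂ : ℤ)
    (hf : Irreducible (X ^ 3 + C c₂ * X ^ 2 + C c₁ * X + C c₀ : ℤ[X]))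
    (r : K)
    (hr : aeval r (X ^ 3 + C c₂ * X ^ 2 + C c₁ * X + C c₀ : ℤ[X]) = 0)
    (hgen : Algebra.adjoin ℚ {r} = ⊤)
    (rO : 𝓞 K) (hrO : algebraMap (𝓞 K) K rO = r)

lemma f_monic : (X ^ 3 + C c₂ * X ^ 2 + C c₁ * X + C c₀ : ℤ[X]).Monic := by
  monicity!

include hr hrO in
lemma f_aeval : aeval rO (X ^ 3 + C c₂ * X ^ 2 + C c₁ * X + C c₀ : ℤ[X]) = 0 := by
  have : Function.Injective (algebraMap (𝓞 K) K) := RingOfIntegers.coe_injective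
  apply this
  rw [← Polynomial.aeval_algebraMap_apply, hrO, hr, map_zero]

include hf hr in
lemma minpoly_r : minpoly ℚ r = (X ^ 3 + C c₂ * X ^ 2 + C c₁ * X + C c₀ : ℤ[X]).map (algebraMap ℤ ℚ) := by
  have hm := f_monic c₀ c₁ c₂
  symm
  apply minpoly.eq_of_irreducible_of_monic
  · exact (hm.irreducible_iff_irreducible_map_fraction_map (K := ℚ)).1 hf
  · rw [Polynomial.aeval_map_algebraMap, hr]
  · exact hm.map _

include hf hr hrO in
lemma minpoly_rO : minpoly ℤ rO = (X ^ 3 + C c₂ * X ^ 2 + C c₁ * X + C c₀ : ℤ[X]) := by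
  apply Polynomial.map_injective (algebraMap ℤ ℚ) (by exact Int.cast_injective)
  rw [← minpoly_r c₀ c₁ c₂ hf r hr, ← hrO]
  exact (minpoly.isIntegrallyClosed_eq_field_fractions ℚ K (RingOfIntegers.isIntegral rO)).symm

include hf hr hgen hrO in
lemma norm_sub (n : ℤ) : Algebra.norm ℤ ((n : 𝓞 K) - rO) = 
    (X ^ 3 + C c₂ * X ^ 2 + C c₁ * X + C c₀ : ℤ[X]).eval n := by
  have hint : IsIntegral ℚ r := Algebra.IsIntegral.isIntegral r
  let pb := PowerBasis.ofAdjoinEqTop hint hgen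
  have hg : pb.gen = r := PowerBasis.ofAdjoinEqTop_gen hint hgen
  have h1 : (Algebra.norm ℤ ((n : 𝓞 K) - rO) : ℚ) = 
     (((X ^ 3 + C c₂ * X ^ 2 + C c₁ * X + C c₀ : ℤ[X]).eval n : ℤ) : ℚ) := by
    rw [Algebra.coe_norm_int]
    have h2 := charpoly_leftMulMatrix pb
    rw [hg, minpoly_r c₀ c₁ c₂ hf r hr] at h2
    have h3 := congrArg (fun q => Polynomial.eval (n:ℚ) q) h2
    simp only [Matrix.eval_charpoly] at h3
    have h4 : Matrix.scalar (Fin pb.dim) (n:ℚ) = Algebra.leftMulMatrix pb.basis (n:K) := by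
      rw [map_intCast, map_intCast]
    rw [h4, ← map_sub, ← Algebra.norm_eq_matrix_det] at h3
    have h5 : (((n : 𝓞 K) - rO : 𝓞 K) : K) = (n : K) - r := by
      rw [← hrO]; simp
    rw [h5]
    simpa using h3
  exact_mod_cast h1


include hf hr hgen hrO in
lemma conductor_mem (y : 𝓞 K) :
    aeval rO (derivative (X ^ 3 + C c₂ * X ^ 2 + C c₁ * X + C c₀ : ℤ[X])) * y ∈
      Algebra.adjoin ℤ {rO} := by
  have h := conductor_mul_differentIdeal ℤ ℚ K rO (by rw [hrO]; exact hgen)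
  rw [minpoly_rO c₀ c₁ c₂ hf r hr rO hrO] at h
  have h2 : aeval rO (derivative (X ^ 3 + C c₂ * X ^ 2 + C c₁ * X + C c₀ : ℤ[X])) ∈
      conductor ℤ rO := by
    apply Ideal.mul_le_left (I := conductor ℤ rO) (J := differentIdeal ℤ (𝓞 K))
    rw [h]; exact Ideal.mem_span_singleton_self _
  exact mem_conductor_iff.1 h2 y

include hf hr hrO in
lemma deriv_ne_zero :
    aeval rO (derivative (X ^ 3 + C c₂ * X ^ 2 + C c₁ * X + C c₀ : ℤ[X])) ≠ 0 := by
  intro h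
  have h1 := (minpoly_r c₀ c₁ c₂ hf r hr)
  have hs : (minpoly ℚ r).Separable := (minpoly.irreducible (Algebra.IsIntegral.isIntegral r)).separable
  have := hs.aeval_derivative_ne_zero (x := r) (minpoly.aeval _ _)
  apply this
  rw [h1, derivative_map, aeval_map_algebraMap, ← hrO, aeval_algebraMap_apply, h, map_zero]

lemma aeval_sub_mem (P : Ideal (𝓞 K)) (n : ℤ) (hn : (n : 𝓞 K) - rO ∈ P) (q : ℤ[X]) :
    ((q.eval n : ℤ) : 𝓞 K) - aeval rO q ∈ P := by
  have h1 : (n : 𝓞 K) - rO ∣ aeval (n : 𝓞 K) q - aeval rO q := by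
    have := Polynomial.sub_dvd_eval_sub (n : 𝓞 K) rO (q.map (algebraMap ℤ (𝓞 K)))
    simpa [aeval_def, eval₂_eq_eval_map] using this
  have h2 : aeval (n : 𝓞 K) q = ((q.eval n : ℤ) : 𝓞 K) := by
    have := Polynomial.aeval_algebraMap_apply (𝓞 K) n q
    simpa using this
  rw [← h2]
  exact P.mem_of_dvd h1 hn

include hf hr hgen hrO in
lemma good_prime (P : Ideal (𝓞 K)) (hP : P.IsPrime) (hP0 : P ≠ ⊥)
    (hM : aeval rO (derivative (X ^ 3 + C c₂ * X ^ 2 + C c₁ * X + C c₀ : ℤ[X])) ∉ P)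
    (n : ℤ) (hn : (n : 𝓞 K) - rO ∈ P) : (Ideal.absNorm P).Prime := by
  have hmax : P.IsMaximal := hP.isMaximal hP0
  obtain ⟨p, k, hk, hpP, hp, hpk⟩ := Ideal.exists_prime_and_absNorm_eq_pow P
  set F := (X ^ 3 + C c₂ * X ^ 2 + C c₁ * X + C c₀ : ℤ[X])
  set m : ℤ := (derivative F).eval n
  have hm := aeval_sub_mem rO P n hn (derivative F)
  have hpm : ¬ (p : ℤ) ∣ m := by
    rintro ⟨t, ht⟩
    apply hM
    have h1 : ((m : ℤ) : 𝓞 K) ∈ P := by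
      rw [ht]; push_cast; exact P.mul_mem_right _ hpP
    have := P.sub_mem h1 hm
    simpa [m] using this
  have hcop : IsCoprime (p : ℤ) m := (Nat.prime_iff_prime_int.1 hp).coprime_iff_not_dvd.2 hpm
  obtain ⟨a, u, hau⟩ := hcop
  have hsurj : ∀ x : 𝓞 K, ∃ z : ℤ, x - (z : 𝓞 K) ∈ P := by
    intro x
    have hx := conductor_mem c₀ c₁ c₂ hf r hr hgen rO hrO x
    rw [Algebra.adjoin_singleton_eq_range_aeval] at hx
    obtain ⟨q, hq⟩ := hx
    have hq' := aeval_sub_mem rO P n hn q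
    refine ⟨u * q.eval n, ?_⟩
    have e : x - ((u * q.eval n : ℤ) : 𝓞 K) = (a * x) * (p : 𝓞 K) +
       (u * x) * ((m : 𝓞 K) - aeval rO (derivative F)) - u * (((q.eval n : ℤ) : 𝓞 K) - aeval rO q) := by
      have h1 : ((a * p + u * m : ℤ) : 𝓞 K) = 1 := by rw [hau]; simp
      have h2 : aeval rO q = aeval rO (derivative F) * x := hq
      rw [h2]
      push_cast at h1 ⊢
      linear_combination (-x) * h1
    rw [e]
    exact P.sub_mem (P.add_mem (P.mul_mem_left _ hpP) (P.mul_mem_left _ hm)) (P.mul_mem_left _ hq')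
  have hle : Ideal.absNorm P ≤ p := by
    rw [Ideal.absNorm_apply, Submodule.cardQuot_apply]
    have : Function.Surjective (fun i : Fin p => (Ideal.Quotient.mk P ((i : ℕ) : 𝓞 K))) := by
      intro y
      obtain ⟨x, rfl⟩ := Ideal.Quotient.mk_surjective y
      obtain ⟨z, hz⟩ := hsurj x
      have hp0 : (0:ℤ) < p := by exact_mod_cast hp.pos
      have h1 := Int.emod_nonneg z hp0.ne'
      have h2 := Int.emod_lt_of_pos z hp0
      refine ⟨⟨(z % p).toNat, by omega⟩, ?_⟩
      simp only
      symm
      rw [Ideal.Quotient.eq]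
      have h3 : (((z % p).toNat : ℕ) : 𝓞 K) = ((z % p : ℤ) : 𝓞 K) := by
        conv_rhs => rw [← Int.toNat_of_nonneg h1]
        rw [Int.cast_natCast]
      have h4 : ((z % p + p * (z / p) : ℤ) : 𝓞 K) = z := by rw [Int.emod_add_mul_ediv]
      rw [h3]
      push_cast at h4
      have : x - ((z % p : ℤ) : 𝓞 K) = (x - z) + ((z / p : ℤ) : 𝓞 K) * p := by
        linear_combination -h4
      rw [this]
      exact P.add_mem hz (P.mul_mem_left _ hpP)
    simpa using Nat.card_le_card_of_surjective _ this
  rw [hpk] at hle ⊢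
  have : k = 1 := by
    have h1 : p ^ k ≤ p ^ 1 := by simpa using hle
    have := (Nat.pow_le_pow_iff_right hp.one_lt).1 h1
    omega
  rw [this, pow_one]; exact hp

include hf hr hgen hrO in
lemma good_spacing (P : Ideal (𝓞 K)) (hP : P.IsPrime) (hP0 : P ≠ ⊥)
    (hM : aeval rO (derivative (X ^ 3 + C c₂ * X ^ 2 + C c₁ * X + C c₀ : ℤ[X])) ∉ P)
    (k : ℕ) (hk : 1 ≤ k) (n m : ℤ) (hn : (n : 𝓞 K) - rO ∈ P ^ k) (hm : (m : 𝓞 K) - rO ∈ P ^ k) :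
    ((Ideal.absNorm P : ℤ)) ^ k ∣ n - m := by
  have hle : P ^ k ≤ P := Ideal.pow_le_self (by omega)
  have hp := good_prime c₀ c₁ c₂ hf r hr hgen rO hrO P hP hP0 hM n (hle hn)
  have hn' := Ideal.absNorm_dvd_norm_of_mem hn
  have hm' := Ideal.absNorm_dvd_norm_of_mem hm
  rw [norm_sub c₀ c₁ c₂ hf r hr hgen rO hrO, map_pow, Nat.cast_pow] at hn' hm'
  have hd := dvd_sub hn' hm'
  set h : ℤ := n ^ 2 + n * m + m ^ 2 + c₂ * (n + m) + c₁
  have he : (X ^ 3 + C c₂ * X ^ 2 + C c₁ * X + C c₀ : ℤ[X]).eval n -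
      (X ^ 3 + C c₂ * X ^ 2 + C c₁ * X + C c₀ : ℤ[X]).eval m = (n - m) * h := by
    simp [h]; ring
  rw [he] at hd
  have hh : ¬ (Ideal.absNorm P : ℤ) ∣ h := by
    rintro ⟨t, ht⟩
    apply hM
    have h1 : (h : 𝓞 K) ∈ P := by
      rw [ht]; push_cast; exact P.mul_mem_right _ (Ideal.absNorm_mem P)
    have h2 : aeval rO (derivative (X ^ 3 + C c₂ * X ^ 2 + C c₁ * X + C c₀ : ℤ[X])) =
      (h : 𝓞 K) - ((n + m + rO + c₂) * (n - rO) + (m + 2 * rO + c₂) * (m - rO)) := by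
      simp [h, map_ofNat]
      ring
    rw [h2]
    exact P.sub_mem h1 (P.add_mem (P.mul_mem_left _ (hle hn)) (P.mul_mem_left _ (hle hm)))
  have hcop : IsCoprime ((Ideal.absNorm P : ℤ) ^ k) h :=
    ((Nat.prime_iff_prime_int.1 hp).coprime_iff_not_dvd.2 hh).pow_left
  exact hcop.dvd_of_dvd_mul_right hd

lemma gen_spacing (P : Ideal (𝓞 K)) (k : ℕ) (n m : ℤ)
    (hn : (n : 𝓞 K) - rO ∈ P ^ k) (hm : (m : 𝓞 K) - rO ∈ P ^ k) :
    ((Ideal.absNorm P : ℤ)) ^ k ∣ (n - m) ^ (Module.finrank ℤ (𝓞 K)) := by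
  have h : ((n - m : ℤ) : 𝓞 K) ∈ P ^ k := by
    have := (P ^ k).sub_mem hn hm
    push_cast
    simpa using this
  have h2 := Ideal.absNorm_dvd_norm_of_mem h
  rw [map_pow, Nat.cast_pow] at h2
  have h3 := Algebra.norm_algebraMap_of_basis (Module.Free.chooseBasis ℤ (𝓞 K)) (n - m)
  rw [← Module.finrank_eq_card_chooseBasisIndex] at h3
  rw [← h3]
  simpa using h2

lemma card_prime_norm (p : ℕ) (hp : p.Prime) (F : Finset (Ideal (𝓞 K)))
    (hF : ∀ P ∈ F, P.IsPrime ∧ Ideal.absNorm P = p) : F.card ≤ Module.finrank ℤ (𝓞 K) := by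
  classical
  set I : Ideal (𝓞 K) := Ideal.span {(p : 𝓞 K)}
  have hN : Ideal.absNorm I = p ^ Module.finrank ℤ (𝓞 K) := Ideal.absNorm_span_natCast p
  have hI : I ≠ ⊥ := by
    simp [I, hp.ne_zero]
  have h := log_norm_eq I hI (F ∪ (UniqueFactorizationMonoid.normalizedFactors I).toFinset)
    (fun P hP => Finset.mem_union_right _ (Multiset.mem_toFinset.2 hP))
  have h2 : ∑ P ∈ F, Real.log p ≤ Real.log (Ideal.absNorm I) := by
    rw [h]
    refine le_trans (Finset.sum_le_sum fun P hP => ?_)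
      (Finset.sum_le_sum_of_subset_of_nonneg Finset.subset_union_left ?_)
    · obtain ⟨h1, h2⟩ := hF P hP
      rw [h2]
      refine le_mul_of_one_le_left (Real.log_natCast_nonneg _) ?_
      have : P ∈ UniqueFactorizationMonoid.normalizedFactors I := by
        rw [Ideal.mem_normalizedFactors_iff hI]
        refine ⟨h1, ?_⟩
        rw [Ideal.span_singleton_le_iff_mem, ← h2]
        exact Ideal.absNorm_mem P
      exact_mod_cast Multiset.one_le_count_iff_mem.2 this
    · intro P _ _
      have hl : 0 ≤ Real.log (Ideal.absNorm P) := Real.log_natCast_nonneg _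
      positivity
  rw [hN] at h2
  push_cast at h2
  rw [Real.log_pow, Finset.sum_const, nsmul_eq_mul] at h2
  have := le_of_mul_le_mul_right h2 (Real.log_pos (by exact_mod_cast hp.one_lt))
  exact_mod_cast this

variable (K) in
lemma card_PS_prime (x : ℝ) :
    ((PS K x).filter (fun P => (Ideal.absNorm P).Prime)).card ≤
      Module.finrank ℤ (𝓞 K) * Nat.primeCounting ⌊x⌋₊ := by
  classical
  rw [← Nat.primesLE_card_eq_primeCounting]
  refine Finset.card_le_mul_card_image_of_maps_to (f := fun P => Ideal.absNorm P) ?_ _ ?_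
  · intro P hP
    obtain ⟨h1, h2⟩ := Finset.mem_filter.1 hP
    simp only [Nat.mem_primesLE]
    exact ⟨Nat.le_floor (mem_PS.1 h1).2.1, h2⟩
  · intro p hp
    refine card_prime_norm p (Nat.mem_primesLE.1 hp).2 _ fun P hP => ?_
    simp only [Finset.mem_filter] at hP
    exact ⟨(mem_PS.1 hP.1.1).2.2, hP.2⟩

end Arith

section Main
variable {K : Type*} [Field K] [NumberField K]

open Classical in
noncomputable def cnt (rO : 𝓞 K) (P : Ideal (𝓞 K)) (n : ℤ) : ℕ :=
  Multiset.count P (UniqueFactorizationMonoid.normalizedFactors (Ideal.span {(n : 𝓞 K) - rO}))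

noncomputable def SZ (Y : ℝ) : Finset ℤ := Finset.Ioo ⌊Y⌋ ⌈2 * Y⌉

lemma mem_SZ {Y : ℝ} {n : ℤ} : n ∈ SZ Y ↔ Y < (n:ℝ) ∧ (n:ℝ) < 2 * Y := by
  rw [SZ, Finset.mem_Ioo, Int.floor_lt, Int.lt_ceil]

lemma card_SZ (Y : ℝ) : Y - 1 ≤ ((SZ Y).card : ℝ) := by
  rw [SZ, Int.card_Ioo]
  have h1 := Int.le_ceil (2 * Y)
  have h2 := Int.floor_le Y
  have h3 : ((⌈2 * Y⌉ - ⌊Y⌋ - 1 : ℤ) : ℝ) ≤ (((⌈2 * Y⌉ - ⌊Y⌋ - 1).toNat : ℤ) : ℝ) := by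
    exact_mod_cast Int.self_le_toNat _
  push_cast at h3
  have h4 : (((⌈2 * Y⌉ - ⌊Y⌋ - 1).toNat : ℤ) : ℝ) = (((⌈2 * Y⌉ - ⌊Y⌋ - 1).toNat : ℕ) : ℝ) := by
    norm_cast
  rw [← h4]
  push_cast
  linarith

lemma L1_eq (rO : 𝓞 K) (n : ℤ) (Y : ℝ) :
    L1 rO n Y = ∑ P ∈ PS K (3 * Y), (cnt rO P n : ℝ) * Real.log (Ideal.absNorm P) := by
  classical
  have hc : ∀ P : Ideal (𝓞 K), Nat.card ((𝓞 K) ⧸ P) = Ideal.absNorm P := fun P => by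
    rw [Ideal.absNorm_apply, Submodule.cardQuot_apply]
  unfold L1
  rw [finsum_eq_sum_of_support_subset (s := PS K (3 * Y))]
  · refine Finset.sum_congr rfl fun P hP => ?_
    obtain ⟨h0, h1, h2⟩ := mem_PS.1 hP
    rw [if_pos ⟨h2, by rw [hc]; exact h1⟩, hc]
    rfl
  · intro P hP
    rw [Function.mem_support] at hP
    split_ifs at hP with h
    · rw [hc] at h
      refine mem_PS.2 ⟨?_, h.2, h.1⟩
      rintro rfl
      apply hP
      simp
    · exact absurd rfl hP

lemma cnt_mem (rO : 𝓞 K) (P : Ideal (𝓞 K)) (n : ℤ) (hn : (n : 𝓞 K) - rO ≠ 0) (k : ℕ)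
    (hk : k ≤ cnt rO P n) : (n : 𝓞 K) - rO ∈ P ^ k := by
  classical
  have h1 := Multiset.prod_dvd_prod_of_le (Multiset.le_count_iff_replicate_le.1 hk)
  have h0 : Ideal.span {(n : 𝓞 K) - rO} ≠ 0 := by simpa using hn
  rw [Multiset.prod_replicate, associated_iff_eq.1
    (UniqueFactorizationMonoid.prod_normalizedFactors h0)] at h1
  exact Ideal.le_of_dvd h1 (Ideal.mem_span_singleton_self _)

lemma poly_bound (c₀ c₁ c₂ : ℤ) : ∀ᶠ Y : ℝ in Filter.atTop, ∀ n : ℤ, Y < (n:ℝ) → (n:ℝ) < 2 * Y →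
    Y ^ 3 / 2 ≤ (((X ^ 3 + C c₂ * X ^ 2 + C c₁ * X + C c₀ : ℤ[X]).eval n : ℤ) : ℝ) ∧
    (((X ^ 3 + C c₂ * X ^ 2 + C c₁ * X + C c₀ : ℤ[X]).eval n : ℤ) : ℝ) ≤ 9 * Y ^ 3 := by
  set D : ℝ := |(c₂:ℝ)| + |(c₁:ℝ)| + |(c₀:ℝ)| with hD
  filter_upwards [Filter.eventually_ge_atTop (1:ℝ), Filter.eventually_ge_atTop (4 * D)] with
    Y hY1 hYD n h1 h2
  have hn1 : (1:ℝ) ≤ n := by linarith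
  have e : (((X ^ 3 + C c₂ * X ^ 2 + C c₁ * X + C c₀ : ℤ[X]).eval n : ℤ) : ℝ) =
    (n:ℝ) ^ 3 + c₂ * (n:ℝ) ^ 2 + c₁ * n + c₀ := by simp
  rw [e]
  have hn2 : (n:ℝ) ≤ (n:ℝ) ^ 2 := by nlinarith
  have hn3 : (1:ℝ) ≤ (n:ℝ) ^ 2 := by nlinarith
  have a2 : |(c₂ : ℝ) * (n:ℝ) ^ 2| = |(c₂:ℝ)| * (n:ℝ) ^ 2 := by rw [abs_mul, abs_of_nonneg (sq_nonneg (n:ℝ))]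
  have a1 : |(c₁ : ℝ) * n| ≤ |(c₁:ℝ)| * (n:ℝ) ^ 2 := by
    rw [abs_mul, abs_of_nonneg (by linarith : (0:ℝ) ≤ n)]
    exact mul_le_mul_of_nonneg_left hn2 (abs_nonneg _)
  have a0 : |(c₀ : ℝ)| ≤ |(c₀:ℝ)| * (n:ℝ) ^ 2 := le_mul_of_one_le_right (abs_nonneg _) hn3
  have hlow : |(c₂ : ℝ) * (n:ℝ) ^ 2 + c₁ * n + c₀| ≤ D * (n:ℝ) ^ 2 := by
    refine (abs_add_three _ _ _).trans ?_
    rw [a2, hD]; linarith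
  obtain ⟨l1, l2⟩ := abs_le.1 hlow
  have hYn : Y ^ 3 ≤ (n:ℝ) ^ 3 := pow_le_pow_left₀ (by linarith) h1.le 3
  have hn8 : (n:ℝ) ^ 3 ≤ (2 * Y) ^ 3 := pow_le_pow_left₀ (by linarith) h2.le 3
  have hn4 : (n:ℝ) ^ 2 ≤ (2 * Y) ^ 2 := pow_le_pow_left₀ (by linarith) h2.le 2
  have hD0 : 0 ≤ D := by positivity
  constructor
  · have : D * (n:ℝ) ^ 2 ≤ (n:ℝ) ^ 3 / 2 := by
      have : D ≤ n / 2 := by linarith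
      nlinarith [sq_nonneg (n:ℝ)]
    linarith
  · have : D * (n:ℝ) ^ 2 ≤ Y ^ 3 := by
      calc D * (n:ℝ) ^ 2 ≤ (Y / 4) * (2 * Y) ^ 2 := by
            apply mul_le_mul (by linarith) hn4 (by positivity) (by positivity)
        _ = Y ^ 3 := by ring
    nlinarith

variable (c₀ c₁ c₂ : ℤ)
    (hf : Irreducible (X ^ 3 + C c₂ * X ^ 2 + C c₁ * X + C c₀ : ℤ[X]))
    (r : K)
    (hr : aeval r (X ^ 3 + C c₂ * X ^ 2 + C c₁ * X + C c₀ : ℤ[X]) = 0)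
    (hgen : Algebra.adjoin ℚ {r} = ⊤)
    (rO : 𝓞 K) (hrO : algebraMap (𝓞 K) K rO = r)

include hf hr hgen hrO in
lemma sub_ne (n : ℤ) 
    (h : 0 < (((X ^ 3 + C c₂ * X ^ 2 + C c₁ * X + C c₀ : ℤ[X]).eval n : ℤ) : ℝ)) :
    (n : 𝓞 K) - rO ≠ 0 := by
  intro h0
  have := norm_sub c₀ c₁ c₂ hf r hr hgen rO hrO n
  rw [h0, Algebra.norm_zero] at this
  rw [← this] at h
  simp at h

include hf hr hgen hrO in
lemma cnt_log (P : Ideal (𝓞 K)) (n : ℤ)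
    (h : 0 < (((X ^ 3 + C c₂ * X ^ 2 + C c₁ * X + C c₀ : ℤ[X]).eval n : ℤ) : ℝ)) :
    (cnt rO P n : ℝ) * Real.log (Ideal.absNorm P) ≤
      Real.log (((X ^ 3 + C c₂ * X ^ 2 + C c₁ * X + C c₀ : ℤ[X]).eval n : ℤ) : ℝ) := by
  have hne := sub_ne c₀ c₁ c₂ hf r hr hgen rO hrO n h
  have h1 := Ideal.absNorm_dvd_norm_of_mem (cnt_mem rO P n hne _ le_rfl)
  rw [norm_sub c₀ c₁ c₂ hf r hr hgen rO hrO n] at h1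
  set g := (X ^ 3 + C c₂ * X ^ 2 + C c₁ * X + C c₀ : ℤ[X]).eval n
  have hg : 0 < g := by exact_mod_cast h
  have h2 := Int.le_of_dvd hg h1
  have h3 : Ideal.absNorm (P ^ cnt rO P n) ≠ 0 := by
    intro h0
    rw [h0] at h1
    simp at h1; omega
  rw [← Real.log_pow]
  have h4 : ((Ideal.absNorm P : ℝ)) ^ cnt rO P n = ((Ideal.absNorm (P ^ cnt rO P n) : ℤ) : ℝ) := by
    rw [map_pow]; push_cast; rfl
  rw [h4]
  apply Real.log_le_log
  · exact_mod_cast Nat.pos_of_ne_zero h3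
  · exact_mod_cast h2

include hf hr hgen hrO in
lemma good_sum (P : Ideal (𝓞 K)) (hP : P.IsPrime) (hP0 : P ≠ ⊥)
    (hM : aeval rO (derivative (X ^ 3 + C c₂ * X ^ 2 + C c₁ * X + C c₀ : ℤ[X])) ∉ P)
    (Y : ℝ) (hY : 1 ≤ Y)
    (hb : ∀ n : ℤ, Y < (n:ℝ) → (n:ℝ) < 2 * Y →
      0 < (((X ^ 3 + C c₂ * X ^ 2 + C c₁ * X + C c₀ : ℤ[X]).eval n : ℤ) : ℝ) ∧
      Real.log (((X ^ 3 + C c₂ * X ^ 2 + C c₁ * X + C c₀ : ℤ[X]).eval n : ℤ) : ℝ) ≤ 4 * Real.log Y) :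
    ∑ n ∈ SZ Y, (cnt rO P n : ℝ) * Real.log (Ideal.absNorm P) ≤
      Y / ((Ideal.absNorm P : ℝ) - 1) * Real.log (Ideal.absNorm P) +
        (if (Ideal.absNorm P).Prime then 4 * Real.log Y else 0) := by
  classical
  have hN2 : (2:ℝ) ≤ Ideal.absNorm P := by exact_mod_cast norm_two_le hP0 hP
  have hl : 0 ≤ Real.log (Ideal.absNorm P) := Real.log_natCast_nonneg _
  have hlY : 0 ≤ Real.log Y := Real.log_nonneg hY
  refine sum_count_le (SZ Y) (cnt rO P) (Ideal.absNorm P) Y (by linarith) (by linarith) ?_ _ _ hl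
    (by split_ifs <;> positivity) ?_
  · intro k hk
    refine spacing_count _ Y _ (by positivity) (by linarith) ?_ ?_
    · intro n hn; exact mem_SZ.1 (Finset.mem_filter.1 hn).1
    · intro n hn m hm hlt
      obtain ⟨hn1, hn2⟩ := Finset.mem_filter.1 hn
      obtain ⟨hm1, hm2⟩ := Finset.mem_filter.1 hm
      have hn3 := mem_SZ.1 hn1
      have hm3 := mem_SZ.1 hm1
      have hn0 := sub_ne c₀ c₁ c₂ hf r hr hgen rO hrO n (hb n hn3.1 hn3.2).1
      have hm0 := sub_ne c₀ c₁ c₂ hf r hr hgen rO hrO m (hb m hm3.1 hm3.2).1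
      have := good_spacing c₀ c₁ c₂ hf r hr hgen rO hrO P hP hP0 hM k hk n m
        (cnt_mem rO P n hn0 k hn2) (cnt_mem rO P m hm0 k hm2)
      have h5 := Int.le_of_dvd (by omega) this
      exact_mod_cast h5
  · intro n hn
    have hn3 := mem_SZ.1 hn
    by_cases h0 : cnt rO P n = 0
    · rw [h0]; simp; split_ifs <;> positivity
    · have hbn := hb n hn3.1 hn3.2
      have hn0 := sub_ne c₀ c₁ c₂ hf r hr hgen rO hrO n hbn.1
      have hmem := cnt_mem rO P n hn0 1 (by omega)
      rw [pow_one] at hmem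
      rw [if_pos (good_prime c₀ c₁ c₂ hf r hr hgen rO hrO P hP hP0 hM n hmem)]
      exact (cnt_log c₀ c₁ c₂ hf r hr hgen rO hrO P n hbn.1).trans hbn.2

variable (K) in
lemma exists_N0 : ∃ N0 : ℝ, 1 < N0 ∧ N0 ^ Module.finrank ℤ (𝓞 K) = 2 := by
  have hd : Module.finrank ℤ (𝓞 K) ≠ 0 := Module.finrank_pos.ne'
  refine ⟨(2:ℝ) ^ ((Module.finrank ℤ (𝓞 K) : ℝ)⁻¹), ?_, Real.rpow_inv_natCast_pow (by norm_num) hd⟩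
  apply Real.one_lt_rpow (by norm_num)
  positivity

include hf hr hgen hrO in
lemma any_sum (N0 : ℝ) (h1 : 1 < N0) (h2 : N0 ^ Module.finrank ℤ (𝓞 K) = 2)
    (P : Ideal (𝓞 K)) (hP : P.IsPrime) (hP0 : P ≠ ⊥)
    (Y : ℝ) (hY : 1 ≤ Y)
    (hb : ∀ n : ℤ, Y < (n:ℝ) → (n:ℝ) < 2 * Y →
      0 < (((X ^ 3 + C c₂ * X ^ 2 + C c₁ * X + C c₀ : ℤ[X]).eval n : ℤ) : ℝ) ∧
      Real.log (((X ^ 3 + C c₂ * X ^ 2 + C c₁ * X + C c₀ : ℤ[X]).eval n : ℤ) : ℝ) ≤ 4 * Real.log Y) :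
    ∑ n ∈ SZ Y, (cnt rO P n : ℝ) * Real.log (Ideal.absNorm P) ≤
      Y / (N0 - 1) * Real.log (Ideal.absNorm P) + 4 * Real.log Y := by
  classical
  have hN2 : (2:ℝ) ≤ Ideal.absNorm P := by exact_mod_cast norm_two_le hP0 hP
  have hl : 0 ≤ Real.log (Ideal.absNorm P) := Real.log_natCast_nonneg _
  have hlY : 0 ≤ Real.log Y := Real.log_nonneg hY
  have hd : Module.finrank ℤ (𝓞 K) ≠ 0 := Module.finrank_pos.ne'
  refine sum_count_le (SZ Y) (cnt rO P) N0 Y (by linarith) (by linarith) ?_ _ _ hl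
    (by positivity) ?_
  · intro k hk
    refine spacing_count _ Y _ (by positivity) (by linarith) ?_ ?_
    · intro n hn; exact mem_SZ.1 (Finset.mem_filter.1 hn).1
    · intro n hn m hm hlt
      obtain ⟨hn1, hn2⟩ := Finset.mem_filter.1 hn
      obtain ⟨hm1, hm2⟩ := Finset.mem_filter.1 hm
      have hn3 := mem_SZ.1 hn1
      have hm3 := mem_SZ.1 hm1
      have hn0 := sub_ne c₀ c₁ c₂ hf r hr hgen rO hrO n (hb n hn3.1 hn3.2).1
      have hm0 := sub_ne c₀ c₁ c₂ hf r hr hgen rO hrO m (hb m hm3.1 hm3.2).1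
      have := gen_spacing rO P k n m
        (cnt_mem rO P n hn0 k hn2) (cnt_mem rO P m hm0 k hm2)
      have hpos : 0 < n - m := by omega
      have h5 := Int.le_of_dvd (by positivity) this
      have h6 : (Ideal.absNorm P : ℝ) ^ k ≤ ((n:ℝ) - m) ^ Module.finrank ℤ (𝓞 K) := by
        exact_mod_cast h5
      have h7 : (N0 ^ k) ^ Module.finrank ℤ (𝓞 K) ≤ ((n:ℝ) - m) ^ Module.finrank ℤ (𝓞 K) := by
        rw [← pow_mul, mul_comm, pow_mul, h2]
        exact (pow_le_pow_left₀ (by norm_num) hN2 k).trans h6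
      have h8 : (0:ℝ) ≤ (n:ℝ) - m := by exact_mod_cast hpos.le
      exact le_of_pow_le_pow_left₀ hd h8 h7
  · intro n hn
    have hn3 := mem_SZ.1 hn
    have hbn := hb n hn3.1 hn3.2
    exact (cnt_log c₀ c₁ c₂ hf r hr hgen rO hrO P n hbn.1).trans hbn.2

include hf hr hrO in
lemma big_good (P : Ideal (𝓞 K)) 
    (h : Ideal.absNorm (Ideal.span {aeval rO (derivative (X ^ 3 + C c₂ * X ^ 2 + C c₁ * X + C c₀ : ℤ[X]))})
      < Ideal.absNorm P) :
    aeval rO (derivative (X ^ 3 + C c₂ * X ^ 2 + C c₁ * X + C c₀ : ℤ[X])) ∉ P := by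
  intro hM
  have h0 := deriv_ne_zero c₀ c₁ c₂ hf r hr rO hrO
  have h1 : Ideal.span {aeval rO (derivative (X ^ 3 + C c₂ * X ^ 2 + C c₁ * X + C c₀ : ℤ[X]))} ≤ P := by
    rwa [Ideal.span_singleton_le_iff_mem]
  have h2 := Ideal.absNorm_dvd_absNorm_of_le h1
  have h3 := Nat.le_of_dvd (Nat.pos_of_ne_zero (by
    rw [Ne, Ideal.absNorm_eq_zero_iff]; simpa using h0)) h2
  omega

include hf hr hgen hrO in
lemma sum_L1 (ε : ℝ) (hε : 0 < ε) : ∀ᶠ Y : ℝ in Filter.atTop,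
    ∑ n ∈ SZ Y, L1 rO n Y ≤ (1 + ε) * Y * Real.log Y := by
  classical
  obtain ⟨η, hη, hη1, hη2⟩ : ∃ η : ℝ, 0 < η ∧ η ≤ 1 ∧ 6 * η ≤ ε :=
    ⟨min 1 (ε/6), by positivity, min_le_left _ _, by linarith [min_le_right 1 (ε/6)]⟩
  obtain ⟨N0, hN1, hN2⟩ := exists_N0 K
  set NM := Ideal.absNorm (Ideal.span {aeval rO (derivative (X ^ 3 + C c₂ * X ^ 2 + C c₁ * X + C c₀ : ℤ[X]))})
  set T : ℝ := max (NM : ℝ) (1 + 1 / η)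
  have hT1 : 1 ≤ T := le_trans (by have : 0 < 1 / η := by positivity
                                   linarith) (le_max_right _ _)
  set d := Module.finrank ℤ (𝓞 K)
  set A : ℝ := ((PS K T).card : ℝ)
  set B : ℝ := Real.log T / (N0 - 1)
  have hB : 0 ≤ B := div_nonneg (Real.log_nonneg hT1) (by linarith)
  set C1 : ℝ := 12 * d * (Real.log 4 + 1)
  set Ctot : ℝ := A * B + 4 * A + (1 + η) ^ 2 * Real.log 3 + C1
  have t3 : Filter.Tendsto (fun Y : ℝ => 3 * Y) Filter.atTop Filter.atTop :=
    Filter.tendsto_id.const_mul_atTop (by norm_num)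
  filter_upwards [t3.eventually (mertens (K := K) η hη),
    t3.eventually (Chebyshev.eventually_primeCounting_le (ε := 1) one_pos),
    poly_bound c₀ c₁ c₂, Filter.eventually_ge_atTop (9:ℝ),
    Real.tendsto_log_atTop.eventually (Filter.eventually_ge_atTop (Ctot / (ε / 2)))] with
    Y hmer hpi hpoly hY9 hlogbig
  have hY0 : 0 < Y := by linarith
  have hlY : 0 < Real.log Y := Real.log_pos (by linarith)
  have hb : ∀ n : ℤ, Y < (n:ℝ) → (n:ℝ) < 2 * Y →
      0 < (((X ^ 3 + C c₂ * X ^ 2 + C c₁ * X + C c₀ : ℤ[X]).eval n : ℤ) : ℝ) ∧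
      Real.log (((X ^ 3 + C c₂ * X ^ 2 + C c₁ * X + C c₀ : ℤ[X]).eval n : ℤ) : ℝ) ≤
        4 * Real.log Y := by
    intro n h1 h2
    obtain ⟨h3, h4⟩ := hpoly n h1 h2
    have hpos : 0 < (((X ^ 3 + C c₂ * X ^ 2 + C c₁ * X + C c₀ : ℤ[X]).eval n : ℤ) : ℝ) :=
      lt_of_lt_of_le (by positivity) h3
    refine ⟨hpos, ?_⟩
    have : 4 * Real.log Y = Real.log (Y ^ 4) := by rw [Real.log_pow]; norm_num
    rw [this]
    refine Real.log_le_log hpos (h4.trans ?_)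
    have : Y ^ 4 = Y * Y ^ 3 := by ring
    rw [this]; gcongr
  simp only [L1_eq]
  rw [Finset.sum_comm]
  have hP : ∀ P ∈ PS K (3 * Y), ∑ n ∈ SZ Y, (cnt rO P n : ℝ) * Real.log (Ideal.absNorm P) ≤
      (if (Ideal.absNorm P : ℝ) ≤ T then Y * B + 4 * Real.log Y else 0) +
      (1 + η) * Y * (Real.log (Ideal.absNorm P) / (Ideal.absNorm P : ℝ)) +
      (if (Ideal.absNorm P).Prime then 4 * Real.log Y else 0) := by
    intro P hP
    obtain ⟨hP0, hPY, hPp⟩ := mem_PS.1 hP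
    have hl : 0 ≤ Real.log (Ideal.absNorm P) := Real.log_natCast_nonneg _
    have hN2' : (2:ℝ) ≤ Ideal.absNorm P := by exact_mod_cast norm_two_le hP0 hPp
    have hmain : 0 ≤ (1 + η) * Y * (Real.log (Ideal.absNorm P) / (Ideal.absNorm P : ℝ)) := by
      positivity
    have hpr : 0 ≤ (if (Ideal.absNorm P).Prime then 4 * Real.log Y else 0) := by
      split_ifs <;> positivity
    by_cases hT : (Ideal.absNorm P : ℝ) ≤ T
    · rw [if_pos hT]
      have := any_sum c₀ c₁ c₂ hf r hr hgen rO hrO N0 hN1 hN2 P hPp hP0 Y (by linarith) hb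
      have h2 : Y / (N0 - 1) * Real.log (Ideal.absNorm P) ≤ Y * B := by
        have : Real.log (Ideal.absNorm P) ≤ Real.log T := Real.log_le_log (by linarith) hT
        have h3 : 0 ≤ Y / (N0 - 1) := div_nonneg hY0.le (by linarith)
        calc _ ≤ Y / (N0 - 1) * Real.log T := mul_le_mul_of_nonneg_left this h3
          _ = Y * B := by simp only [B]; ring
      linarith
    · rw [if_neg hT]
      push Not at hT
      have hM := big_good c₀ c₁ c₂ hf r hr rO hrO P (by
        exact_mod_cast lt_of_le_of_lt (le_max_left _ _) hT)
      have := good_sum c₀ c₁ c₂ hf r hr hgen rO hrO P hPp hP0 hM Y (by linarith) hb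
      have h2 : Y / ((Ideal.absNorm P : ℝ) - 1) * Real.log (Ideal.absNorm P) ≤
          (1 + η) * Y * (Real.log (Ideal.absNorm P) / (Ideal.absNorm P : ℝ)) := by
        have h3 : 1 + 1 / η < (Ideal.absNorm P : ℝ) := lt_of_le_of_lt (le_max_right _ _) hT
        have h4 : 1 / ((Ideal.absNorm P : ℝ) - 1) ≤ (1 + η) / (Ideal.absNorm P : ℝ) := by
          rw [div_le_div_iff₀ (by linarith) (by linarith)]
          have : η * (1 + 1 / η) = η + 1 := by field_simp
          nlinarith
        calc _ = (Y * Real.log (Ideal.absNorm P)) * (1 / ((Ideal.absNorm P : ℝ) - 1)) := by ring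
          _ ≤ (Y * Real.log (Ideal.absNorm P)) * ((1 + η) / (Ideal.absNorm P : ℝ)) :=
            mul_le_mul_of_nonneg_left h4 (by positivity)
          _ = _ := by ring
      linarith
  refine (Finset.sum_le_sum hP).trans ?_
  rw [Finset.sum_add_distrib, Finset.sum_add_distrib, ← Finset.mul_sum, ← Finset.sum_filter,
    ← Finset.sum_filter, Finset.sum_const, Finset.sum_const, nsmul_eq_mul, nsmul_eq_mul]
  have s1 : (((PS K (3 * Y)).filter (fun P => (Ideal.absNorm P : ℝ) ≤ T)).card : ℝ) ≤ A := by
    have : (PS K (3 * Y)).filter (fun P => (Ideal.absNorm P : ℝ) ≤ T) ⊆ PS K T := by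
      intro P hP
      obtain ⟨h1, h2⟩ := Finset.mem_filter.1 hP
      obtain ⟨a, b, c⟩ := mem_PS.1 h1
      exact mem_PS.2 ⟨a, h2, c⟩
    exact Nat.cast_le.2 (Finset.card_le_card this)
  have s2 : (((PS K (3 * Y)).filter (fun P => (Ideal.absNorm P).Prime)).card : ℝ) ≤
      d * ((Real.log 4 + 1) * (3 * Y) / Real.log (3 * Y)) := by
    have h := card_PS_prime K (3 * Y)
    have h' : (((PS K (3 * Y)).filter (fun P => (Ideal.absNorm P).Prime)).card : ℝ) ≤
      d * (Nat.primeCounting ⌊3 * Y⌋₊ : ℝ) := by exact_mod_cast h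
    exact h'.trans (mul_le_mul_of_nonneg_left hpi (by positivity))
  have hl3 : Real.log (3 * Y) = Real.log 3 + Real.log Y := Real.log_mul (by norm_num) hY0.ne'
  have hl3p : 0 < Real.log 3 := Real.log_pos (by norm_num)
  have hl4p : 0 < Real.log 4 := Real.log_pos (by norm_num)
  have b1 : (((PS K (3 * Y)).filter (fun P => (Ideal.absNorm P : ℝ) ≤ T)).card : ℝ) *
      (Y * B + 4 * Real.log Y) ≤ Y * (A * B + 4 * A) := by
    have hA : 0 ≤ A := by positivity
    have : Real.log Y ≤ Y := (Real.log_le_sub_one_of_pos hY0).trans (by linarith)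
    calc _ ≤ A * (Y * B + 4 * Real.log Y) := mul_le_mul_of_nonneg_right s1 (by positivity)
      _ ≤ A * (Y * B + 4 * Y) := mul_le_mul_of_nonneg_left (by linarith) hA
      _ = _ := by ring
  have b2 : (1 + η) * Y * ∑ P ∈ PS K (3 * Y), Real.log (Ideal.absNorm P) / (Ideal.absNorm P : ℝ) ≤
      (1 + η) * Y * ((1 + η) * (Real.log 3 + Real.log Y)) := by
    rw [← hl3]
    exact mul_le_mul_of_nonneg_left hmer (by positivity)
  have b3 : (((PS K (3 * Y)).filter (fun P => (Ideal.absNorm P).Prime)).card : ℝ) *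
      (4 * Real.log Y) ≤ C1 * Y := by
    calc _ ≤ d * ((Real.log 4 + 1) * (3 * Y) / Real.log (3 * Y)) * (4 * Real.log Y) :=
          mul_le_mul_of_nonneg_right s2 (by positivity)
      _ = C1 * Y * (Real.log Y / Real.log (3 * Y)) := by simp only [C1]; ring
      _ ≤ C1 * Y * 1 := by
          apply mul_le_mul_of_nonneg_left _ (by positivity)
          rw [div_le_one (by rw [hl3]; linarith), hl3]; linarith
      _ = _ := mul_one _
  rw [div_le_iff₀ (by positivity)] at hlogbig
  have hfin : (1 + η) ^ 2 ≤ 1 + ε / 2 := by nlinarith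
  have b4 : Y * Ctot ≤ Y * (Real.log Y * (ε / 2)) := mul_le_mul_of_nonneg_left hlogbig hY0.le
  have b5 : (1 + η) ^ 2 * (Y * Real.log Y) ≤ (1 + ε / 2) * (Y * Real.log Y) :=
    mul_le_mul_of_nonneg_right hfin (by positivity)
  have : Y * Ctot = Y * (A * B + 4 * A) + (1 + η) ^ 2 * Real.log 3 * Y + C1 * Y := by
    simp only [Ctot]; ring
  nlinarith

end Main

section Final
variable {K : Type*} [Field K] [NumberField K]

lemma card_SZ_le (Y : ℝ) (hY : 1 ≤ Y) : ((SZ Y).card : ℝ) ≤ Y + 1 := by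
  rw [SZ, Int.card_Ioo]
  have h1 := Int.ceil_lt_add_one (2 * Y)
  have h2 := Int.sub_one_lt_floor Y
  have h0 : (0:ℤ) ≤ ⌈2 * Y⌉ - ⌊Y⌋ - 1 := by
    have : ⌊Y⌋ < ⌈2 * Y⌉ := Int.lt_ceil.2 ((Int.floor_le Y).trans_lt (by linarith))
    omega
  have h4 : (((⌈2 * Y⌉ - ⌊Y⌋ - 1).toNat : ℕ) : ℝ) = (((⌈2 * Y⌉ - ⌊Y⌋ - 1).toNat : ℤ) : ℝ) := by
    norm_cast
  rw [h4, Int.toNat_of_nonneg h0]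
  push_cast
  linarith

lemma L1_nonneg (rO : 𝓞 K) (n : ℤ) (Y : ℝ) : 0 ≤ L1 rO n Y := by
  rw [L1_eq]
  exact Finset.sum_nonneg fun P _ => mul_nonneg (Nat.cast_nonneg _) (Real.log_natCast_nonneg _)

lemma per_n (c₀ c₁ c₂ : ℤ)
    (hf : Irreducible (X ^ 3 + C c₂ * X ^ 2 + C c₁ * X + C c₀ : ℤ[X]))
    (r : K)
    (hr : aeval r (X ^ 3 + C c₂ * X ^ 2 + C c₁ * X + C c₀ : ℤ[X]) = 0)
    (hgen : Algebra.adjoin ℚ {r} = ⊤)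
    (rO : 𝓞 K) (hrO : algebraMap (𝓞 K) K rO = r) (n : ℤ) (Y η ε : ℝ) (hY : 1 < Y)
    (hb1 : Y ^ 3 / 2 ≤ (((X ^ 3 + C c₂ * X ^ 2 + C c₁ * X + C c₀ : ℤ[X]).eval n : ℤ) : ℝ))
    (hb2 : (((X ^ 3 + C c₂ * X ^ 2 + C c₁ * X + C c₀ : ℤ[X]).eval n : ℤ) : ℝ) ≤ 9 * Y ^ 3)
    (hNM : (Ideal.absNorm (Ideal.span {aeval rO
      (derivative (X ^ 3 + C c₂ * X ^ 2 + C c₁ * X + C c₀ : ℤ[X]))}) : ℝ) ≤ 3 * Y)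
    (hl1 : Real.log 2 < 2 * ε * Real.log Y) (hl2 : Real.log 2 < (2 + η) * Real.log Y)
    (hL1 : L1 rO n Y ≤ (1 - η) * Real.log Y) :
    ∃ p : ℕ, p.Prime ∧ (p : ℤ) ∣ (X ^ 3 + C c₂ * X ^ 2 + C c₁ * X + C c₀ : ℤ[X]).eval n ∧
          Y ^ (1 + η / 2 - ε) ≤ (p : ℝ) := by
  classical
  have hY0 : 0 < Y := by linarith
  have hg0 := lt_of_lt_of_le (by positivity) hb1
  have hne := sub_ne c₀ c₁ c₂ hf r hr hgen rO hrO n hg0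
  have hnorm := norm_sub c₀ c₁ c₂ hf r hr hgen rO hrO n
  set g : ℤ := (X ^ 3 + C c₂ * X ^ 2 + C c₁ * X + C c₀ : ℤ[X]).eval n with hg
  have hgz : 0 < g := by exact_mod_cast hg0
  have hI : Ideal.span {(n : 𝓞 K) - rO} ≠ ⊥ := by simpa using hne
  have hIn : (Ideal.absNorm (Ideal.span {(n : 𝓞 K) - rO}) : ℝ) = g := by
    rw [Ideal.absNorm_span_singleton, hnorm]
    rw [← Int.cast_natCast, Int.natAbs_of_nonneg hgz.le]
  set F := PS K (max (g:ℝ) (3 * Y)) with hF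
  have hlog := log_norm_eq (Ideal.span {(n : 𝓞 K) - rO}) hI F (by
    intro P hP
    rw [Ideal.mem_normalizedFactors_iff hI] at hP
    refine mem_PS.2 ⟨?_, ?_, hP.1⟩
    · rintro rfl
      exact hI (le_bot_iff.1 hP.2)
    · refine le_trans ?_ (le_max_left _ _)
      rw [← hIn]
      have h0 : Ideal.absNorm (Ideal.span {(n : 𝓞 K) - rO}) ≠ 0 := by
        rw [Ne, Ideal.absNorm_eq_zero_iff]; exact hI
      exact_mod_cast Nat.le_of_dvd (Nat.pos_of_ne_zero h0) (Ideal.absNorm_dvd_absNorm_of_le hP.2))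
  rw [hIn] at hlog
  change Real.log g = ∑ P ∈ F, (cnt rO P n : ℝ) * Real.log (Ideal.absNorm P) at hlog
  rw [← Finset.sum_filter_add_sum_filter_not F (fun P => (Ideal.absNorm P : ℝ) ≤ 3 * Y)] at hlog
  have hF1 : F.filter (fun P => (Ideal.absNorm P : ℝ) ≤ 3 * Y) = PS K (3 * Y) := by
    ext P
    rw [Finset.mem_filter, mem_PS, mem_PS]
    constructor
    · rintro ⟨⟨a, b, c⟩, d⟩; exact ⟨a, d, c⟩
    · rintro ⟨a, b, c⟩; exact ⟨⟨a, b.trans (le_max_right _ _), c⟩, b⟩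
  rw [hF1, ← L1_eq] at hlog
  set G := F.filter (fun P => ¬ (Ideal.absNorm P : ℝ) ≤ 3 * Y) with hG
  have hl3 : Real.log (3 * Y) = Real.log 3 + Real.log Y := Real.log_mul (by norm_num) hY0.ne'
  have hl3p : 0 < Real.log 3 := Real.log_pos (by norm_num)
  have hlY : 0 < Real.log Y := Real.log_pos hY
  have hlow : 3 * Real.log Y - Real.log 2 ≤ Real.log g := by
    have := Real.log_le_log (by positivity) hb1
    rw [Real.log_div (by positivity) (by norm_num), Real.log_pow] at this
    exact_mod_cast this
  have hup : Real.log g ≤ 2 * Real.log 3 + 3 * Real.log Y := by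
    have := Real.log_le_log hg0 hb2
    rw [Real.log_mul (by norm_num) (by positivity), Real.log_pow,
      show (9:ℝ) = 3 ^ 2 by norm_num, Real.log_pow] at this
    exact_mod_cast this
  have hL0 := L1_nonneg rO n Y
  have hm : ∑ P ∈ G, cnt rO P n ≤ 2 := by
    by_contra hcon
    push Not at hcon
    have hcon' : (3:ℝ) ≤ ∑ P ∈ G, (cnt rO P n : ℝ) := by exact_mod_cast hcon
    have h1 : (∑ P ∈ G, (cnt rO P n : ℝ)) * Real.log (3 * Y) ≤
        ∑ P ∈ G, (cnt rO P n : ℝ) * Real.log (Ideal.absNorm P) := by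
      rw [Finset.sum_mul]
      refine Finset.sum_le_sum fun P hP => mul_le_mul_of_nonneg_left ?_ (Nat.cast_nonneg _)
      refine Real.log_le_log (by positivity) (not_le.1 (Finset.mem_filter.1 hP).2).le
    have h2 : 3 * Real.log (3 * Y) ≤ (∑ P ∈ G, (cnt rO P n : ℝ)) * Real.log (3 * Y) :=
      mul_le_mul_of_nonneg_right hcon' (by rw [hl3]; positivity)
    linarith
  have hm' : ∑ P ∈ G, (cnt rO P n : ℝ) ≤ 2 := by exact_mod_cast hm
  have hex : ∃ P ∈ G, 0 < cnt rO P n ∧ (1 + η / 2 - ε) * Real.log Y ≤ Real.log (Ideal.absNorm P) := by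
    by_contra hcon
    push Not at hcon
    have h1 : ∑ P ∈ G, (cnt rO P n : ℝ) * Real.log (Ideal.absNorm P) ≤
        (∑ P ∈ G, (cnt rO P n : ℝ)) * max ((1 + η / 2 - ε) * Real.log Y) 0 := by
      rw [Finset.sum_mul]
      refine Finset.sum_le_sum fun P hP => ?_
      rcases Nat.eq_zero_or_pos (cnt rO P n) with h | h
      · simp [h]
      · exact mul_le_mul_of_nonneg_left ((hcon P hP h).le.trans (le_max_left _ _)) (Nat.cast_nonneg _)
    have h2 : (∑ P ∈ G, (cnt rO P n : ℝ)) * max ((1 + η / 2 - ε) * Real.log Y) 0 ≤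
        2 * max ((1 + η / 2 - ε) * Real.log Y) 0 :=
      mul_le_mul_of_nonneg_right hm' (le_max_right _ _)
    rcases max_cases ((1 + η / 2 - ε) * Real.log Y) 0 with ⟨h, _⟩ | ⟨h, _⟩
    · rw [h] at h1 h2; linarith
    · rw [h] at h1 h2; linarith
  obtain ⟨P, hPG, hc, hPl⟩ := hex
  obtain ⟨hPF, hP3⟩ := Finset.mem_filter.1 hPG
  obtain ⟨hP0, -, hPp⟩ := mem_PS.1 hPF
  have hmem : (n : 𝓞 K) - rO ∈ P := by
    have := cnt_mem rO P n hne 1 hc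
    rwa [pow_one] at this
  have hM := big_good c₀ c₁ c₂ hf r hr rO hrO P (by
    exact_mod_cast lt_of_le_of_lt hNM (not_le.1 hP3))
  refine ⟨Ideal.absNorm P, good_prime c₀ c₁ c₂ hf r hr hgen rO hrO P hPp hP0 hM n hmem, ?_, ?_⟩
  · have := Ideal.absNorm_dvd_norm_of_mem hmem
    rwa [hnorm] at this
  · have hNp : (0:ℝ) < Ideal.absNorm P := by
      have := norm_two_le hP0 hPp
      exact_mod_cast (by omega : 0 < Ideal.absNorm P)
    rw [← Real.log_le_log_iff (by positivity) hNp, Real.log_rpow hY0]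
    exact hPl

end Final

/-- Let `α, δ > 0` and suppose that for every sufficiently large `X` there is
a set `A₁(X) ⊆ {n : X < n < 2X}` with `#A₁(X)/X → α` and `L₁(n, X) > (1 + δ)·log X` on
`A₁(X)`. Then for every `ε > 0` and all sufficiently large `X`, the number of integers
`n ∈ (X, 2X)` for which `f(n)` has a prime factor `p ≥ X^(1 + αδ/2 − ε)` is at least
`(α²δ − ε)·X`. -/
theorem stmt_6 (c₀ c₁ c₂ : ℤ)
    (hf : Irreducible (X ^ 3 + C c₂ * X ^ 2 + C c₁ * X + C c₀ : ℤ[X]))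
    (K : Type*) [Field K] [NumberField K] (r : K)
    (hr : aeval r (X ^ 3 + C c₂ * X ^ 2 + C c₁ * X + C c₀ : ℤ[X]) = 0)
    (hgen : Algebra.adjoin ℚ {r} = ⊤)
    (rO : 𝓞 K) (hrO : algebraMap (𝓞 K) K rO = r)
    (α δ : ℝ) (hα : 0 < α) (hδ : 0 < δ)
    (A₁ : ℝ → Set ℤ)
    (hsub : ∀ Y : ℝ, A₁ Y ⊆ {n : ℤ | Y < (n : ℝ) ∧ (n : ℝ) < 2 * Y})
    (hcard : Filter.Tendsto (fun Y : ℝ => (Nat.card (A₁ Y) : ℝ) / Y)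
      Filter.atTop (nhds α))
    (hL : ∀ᶠ Y : ℝ in Filter.atTop, ∀ n ∈ A₁ Y, (1 + δ) * Real.log Y < L1 rO n Y) :
    ∀ ε > (0 : ℝ), ∀ᶠ Y : ℝ in Filter.atTop,
      (α ^ 2 * δ - ε) * Y ≤ Nat.card {n : ℤ // Y < (n : ℝ) ∧ (n : ℝ) < 2 * Y ∧
        ∃ p : ℕ, p.Prime ∧ (p : ℤ) ∣ (X ^ 3 + C c₂ * X ^ 2 + C c₁ * X + C c₀ : ℤ[X]).eval n ∧
          Y ^ (1 + α * δ / 2 - ε) ≤ (p : ℝ)} := by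
  intro ε hε
  classical
  have hη : 0 < α * δ := mul_pos hα hδ
  set ε2 : ℝ := ε / 4 / (δ + α * δ) with hε2
  have hε2p : 0 < ε2 := by positivity
  have hε2m : (δ + α * δ) * ε2 = ε / 4 := by rw [hε2]; field_simp
  filter_upwards [sum_L1 c₀ c₁ c₂ hf r hr hgen rO hrO (ε / 4) (by positivity),
    hcard.eventually_const_lt (show α - ε2 < α by linarith), hL, poly_bound c₀ c₁ c₂,
    Filter.eventually_gt_atTop (1:ℝ),
    Filter.eventually_ge_atTop (Ideal.absNorm (Ideal.span {aeval rO
      (derivative (X ^ 3 + C c₂ * X ^ 2 + C c₁ * X + C c₀ : ℤ[X]))}) : ℝ),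
    Real.tendsto_log_atTop.eventually (Filter.eventually_gt_atTop (Real.log 2 / (2 * ε))),
    Real.tendsto_log_atTop.eventually (Filter.eventually_gt_atTop (Real.log 2)),
    Filter.eventually_ge_atTop ((1 + α * δ) / (ε / 2))] with
    Y hsum hA hLY hpoly hY1 hNM hlog1 hlog2 hYbig
  have hY0 : 0 < Y := by linarith
  have hlY : 0 < Real.log Y := Real.log_pos hY1
  set A := (SZ Y).filter (fun n => n ∈ A₁ Y) with hAdef
  set B := ((SZ Y).filter (fun n => n ∉ A₁ Y)).filter
    (fun n => L1 rO n Y ≤ (1 - α * δ) * Real.log Y) with hBdef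
  set D := ((SZ Y).filter (fun n => n ∉ A₁ Y)).filter
    (fun n => ¬ L1 rO n Y ≤ (1 - α * δ) * Real.log Y) with hDdef
  have hcA : Nat.card (A₁ Y) = A.card := by
    have := Nat.subtype_card (p := fun n => n ∈ A₁ Y) A (fun n => by
      rw [hAdef, Finset.mem_filter, mem_SZ]
      exact ⟨fun h => h.2, fun h => ⟨hsub Y h, h⟩⟩)
    exact this
  rw [hcA, lt_div_iff₀ hY0] at hA
  have hcards : A.card + (B.card + D.card) = (SZ Y).card := by
    rw [hBdef, hDdef, Finset.card_filter_add_card_filter_not, hAdef,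
      Finset.card_filter_add_card_filter_not]
  have hcards' : (A.card : ℝ) + (B.card + D.card) = (SZ Y).card := by exact_mod_cast hcards
  have hsplit : ∑ n ∈ SZ Y, L1 rO n Y =
      ∑ n ∈ A, L1 rO n Y + (∑ n ∈ B, L1 rO n Y + ∑ n ∈ D, L1 rO n Y) := by
    rw [hBdef, hDdef, Finset.sum_filter_add_sum_filter_not, hAdef,
      Finset.sum_filter_add_sum_filter_not]
  have sA : (A.card : ℝ) * ((1 + δ) * Real.log Y) ≤ ∑ n ∈ A, L1 rO n Y := by
    rw [← nsmul_eq_mul]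
    exact Finset.card_nsmul_le_sum _ _ _ fun n hn => (hLY n (Finset.mem_filter.1 hn).2).le
  have sD : (D.card : ℝ) * ((1 - α * δ) * Real.log Y) ≤ ∑ n ∈ D, L1 rO n Y := by
    rw [← nsmul_eq_mul]
    exact Finset.card_nsmul_le_sum _ _ _ fun n hn => (not_le.1 (Finset.mem_filter.1 hn).2).le
  have sB : 0 ≤ ∑ n ∈ B, L1 rO n Y := Finset.sum_nonneg fun n _ => L1_nonneg rO n Y
  have key : (A.card : ℝ) * (1 + δ) + D.card * (1 - α * δ) ≤ (1 + ε / 4) * Y := by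
    have : ((A.card : ℝ) * (1 + δ) + D.card * (1 - α * δ)) * Real.log Y ≤
        ((1 + ε / 4) * Y) * Real.log Y := by linarith
    exact le_of_mul_le_mul_right this hlY
  have hD : (D.card : ℝ) = (SZ Y).card - A.card - B.card := by linarith
  rw [hD] at key
  have hSlow := card_SZ Y
  have hSup := card_SZ_le Y hY1.le
  have hS : (1 - α * δ) * Y - (1 + α * δ) ≤ (1 - α * δ) * (SZ Y).card := by
    have h1 : 0 ≤ (SZ Y).card - (Y - 1) := by linarith
    nlinarith
  have hAm : (δ + α * δ) * ((α - ε2) * Y) ≤ (δ + α * δ) * A.card :=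
    mul_le_mul_of_nonneg_left hA.le (by positivity)
  rw [div_le_iff₀ (by positivity)] at hYbig
  have hBlow : (α ^ 2 * δ - ε) * Y ≤ (B.card : ℝ) := by
    have hBn : 0 ≤ (α * δ) * (B.card : ℝ) := by positivity
    have e1 : (δ + α * δ) * ((α - ε2) * Y) = (δ + α * δ) * α * Y - ε / 4 * Y := by
      rw [← hε2m]; ring
    rw [e1] at hAm
    nlinarith
  refine hBlow.trans ?_
  have hfin : Nat.card {n : ℤ // Y < (n : ℝ) ∧ (n : ℝ) < 2 * Y ∧
        ∃ p : ℕ, p.Prime ∧ (p : ℤ) ∣ (X ^ 3 + C c₂ * X ^ 2 + C c₁ * X + C c₀ : ℤ[X]).eval n ∧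
          Y ^ (1 + α * δ / 2 - ε) ≤ (p : ℝ)} = ((SZ Y).filter (fun n : ℤ => ∃ p : ℕ, p.Prime ∧
            (p : ℤ) ∣ (X ^ 3 + C c₂ * X ^ 2 + C c₁ * X + C c₀ : ℤ[X]).eval n ∧
          Y ^ (1 + α * δ / 2 - ε) ≤ (p : ℝ))).card := by
    refine Nat.subtype_card _ fun n => ?_
    rw [Finset.mem_filter, mem_SZ, and_assoc]
  rw [hfin]
  refine Nat.cast_le.2 (Finset.card_le_card ?_)
  intro n hn
  obtain ⟨hn1, hn2⟩ := Finset.mem_filter.1 hn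
  have hn3 := (Finset.mem_filter.1 hn1).1
  refine Finset.mem_filter.2 ⟨hn3, ?_⟩
  obtain ⟨y1, y2⟩ := mem_SZ.1 hn3
  obtain ⟨b1, b2⟩ := hpoly n y1 y2
  refine per_n c₀ c₁ c₂ hf r hr hgen rO hrO n Y (α * δ) ε hY1 b1 b2 (by linarith) ?_ ?_ hn2
  · rw [div_lt_iff₀ (by positivity)] at hlog1
    linarith
  · nlinarith
end
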